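/- arXiv:math/0502455 — 2 statements merged into one kernel-verified Lean document; each statement's English description precedes it below -/
import Mathlib

section
/- Let P be a collection of nonempty bounded open intervals of ℝ with ∪P = (a,b) for real numbers a < b. If there exist x, y ∈ (a,b) such that L_P(x) = a and R_P(y) = b, then (a,b) admits a finite inner cover with respect to P. -/
open Set

/-- A linked list of (nonempty bounded open) intervals `(a i, b i)` of `ℝ`, indexed by a
nonempty set `S` of consecutive integers, consecutive intervals overlapping and the chain
condition `a i < b (i-1) < a (i+1) < b i` holding whenever the indices involved lie in `S`. -/
structure LinkedList where
  S : Set ℤ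
  nonempty : S.Nonempty
  consecutive : ∀ i ∈ S, ∀ k ∈ S, ∀ j : ℤ, i ≤ j → j ≤ k → j ∈ S
  a : ℤ → ℝ
  b : ℤ → ℝ
  lt : ∀ i ∈ S, a i < b i
  mono_a : ∀ i : ℤ, i ∈ S → i + 1 ∈ S → a i < a (i + 1)
  mono_b : ∀ i : ℤ, i ∈ S → i + 1 ∈ S → b i < b (i + 1)
  overlap : ∀ i : ℤ, i ∈ S → i + 1 ∈ S → a (i + 1) < b i
  gap : ∀ i : ℤ, i ∈ S → i + 2 ∈ S → b i < a (i + 2)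

namespace LinkedList

/-- The `i`-th interval of the list. -/
def interval (L : LinkedList) (i : ℤ) : Set ℝ := Ioo (L.a i) (L.b i)

/-- The union of the intervals of the list. -/
def union (L : LinkedList) : Set ℝ := ⋃ i ∈ L.S, L.interval i

/-- The list has a least element. -/
def HasLeast (L : LinkedList) : Prop := ∃ i ∈ L.S, ∀ j ∈ L.S, i ≤ j

/-- The list has a greatest element. -/
def HasGreatest (L : LinkedList) : Prop := ∃ i ∈ L.S, ∀ j ∈ L.S, j ≤ i

end LinkedList

/-- `P` is a collection of nonempty bounded open intervals of `ℝ`. -/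
def IsIntervalCollection (P : Set (Set ℝ)) : Prop :=
  ∀ J ∈ P, ∃ c d : ℝ, c < d ∧ J = Ioo c d

/-- An interval is dominated by `P` if it is contained in some member of `P`. -/
def Dominated (P : Set (Set ℝ)) (J : Set ℝ) : Prop := ∃ K ∈ P, J ⊆ K

/-- An interval is approximately dominated by `P` if it is the union of an increasing
sequence of intervals, each dominated by `P`. -/
def ApproxDominated (P : Set (Set ℝ)) (J : Set ℝ) : Prop :=
  ∃ c d : ℕ → ℝ, (∀ n, c n < d n) ∧
    (∀ n, Ioo (c n) (d n) ⊆ Ioo (c (n + 1)) (d (n + 1))) ∧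
    (∀ n, Dominated P (Ioo (c n) (d n))) ∧ J = ⋃ n, Ioo (c n) (d n)

/-- An inner cover of `(x, y)` with respect to `P`: a linked list with union `(x, y)`, each of
whose intervals is approximately dominated by `P`. -/
def IsInnerCover (P : Set (Set ℝ)) (x y : ℝ) (L : LinkedList) : Prop :=
  L.union = Ioo x y ∧ ∀ i ∈ L.S, ApproxDominated P (L.interval i)

/-- An outer cover of `(x, y)` with respect to `P`: a linked list with union `(x, y)` such that
every member of `P` is contained in some interval of the list. -/
def IsOuterCover (P : Set (Set ℝ)) (x y : ℝ) (L : LinkedList) : Prop :=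
  L.union = Ioo x y ∧ ∀ J ∈ P, ∃ i ∈ L.S, J ⊆ L.interval i

/-- `L_P(x)`: the infimum of left endpoints of members of `P` containing `x`. -/
noncomputable def leftEnd (P : Set (Set ℝ)) (x : ℝ) : ℝ :=
  sInf {c | ∃ d, Ioo c d ∈ P ∧ x ∈ Ioo c d}

/-- `R_P(x)`: the supremum of right endpoints of members of `P` containing `x`. -/
noncomputable def rightEnd (P : Set (Set ℝ)) (x : ℝ) : ℝ :=
  sSup {d | ∃ c, Ioo c d ∈ P ∧ x ∈ Ioo c d}

/-!
Both `(a, x)` and `(y, b)` are approximately dominated: an interval compactly contained in `(a, x)`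
lies in a member of `P` through `x` whose left endpoint is close to `L_P(x) = a`, and symmetrically
for `(y, b)`. Starting from the one-interval list `(a, x)`, the list is grown to the right. If its
last right endpoint `d` lies in an approximately dominated interval `(c, e)`, then moving `c` up to
a point just below `d` makes `(c, e)` disjoint from all but the last interval of the list, so that
it can be appended. A point `z < b` beyond `x` and `y` is reached in finitely many such steps
because `[x, z]` is compact, and then `(y, b)` completes the cover.
-/

namespace LinkedList

variable {L : LinkedList} {n : ℤ}

theorem strictMonoOn_b (L : LinkedList) : StrictMonoOn L.b L.S :=
  strictMonoOn_of_lt_succ ⟨fun i hi k hk j hj => L.consecutive i hi k hk j hj.1 hj.2⟩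
    fun i _ hi hi' => L.mono_b i hi hi'

theorem interval_subset_union {i : ℤ} (hi : i ∈ L.S) : L.interval i ⊆ L.union :=
  subset_biUnion_of_mem hi

theorem union_nonempty (L : LinkedList) : L.union.Nonempty :=
  let ⟨i, hi⟩ := L.nonempty
  (nonempty_Ioo.2 (L.lt i hi)).mono (interval_subset_union hi)

theorem isLUB_union (hn : IsGreatest L.S n) : IsLUB L.union (L.b n) := by
  refine ⟨fun t ht => ?_, fun u hu => ?_⟩
  · obtain ⟨i, hi, hti⟩ := mem_iUnion₂.1 ht
    exact hti.2.le.trans (L.strictMonoOn_b.monotoneOn hi hn.1 (hn.2 hi))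
  · exact (isLUB_Ioo (L.lt n hn.1)).2 (upperBounds_mono_set (interval_subset_union hn.1) hu)

open scoped Topology in
theorem eventually_nhds_b_gt_a_and_gt_b_pred (hn : n ∈ L.S) :
    ∀ᶠ t in 𝓝 (L.b n), L.a n < t ∧ (n - 1 ∈ L.S → L.b (n - 1) < t) := by
  refine (eventually_gt_nhds (L.lt n hn)).and (Filter.eventually_imp_distrib_left.2 fun hn' => ?_)
  exact eventually_gt_nhds (L.strictMonoOn_b hn' hn (sub_one_lt n))

/-- The linked list whose only interval is `(a, b)`, from which longer lists are grown; its index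
is `0`. -/
def singleton (a b : ℝ) (hab : a < b) : LinkedList where
  S := {0}
  nonempty := singleton_nonempty 0
  consecutive := by grind
  a _ := a
  b _ := b
  lt _ _ := hab
  mono_a := by grind
  mono_b := by grind
  overlap := by grind
  gap := by grind

/-- The linked list obtained from a list `L` with last index `n` by appending the interval `(c, d)`
at index `n + 1`. The hypotheses are the chain condition at the new interval. -/
def snoc (L : LinkedList) {n : ℤ} (hn : IsGreatest L.S n) {c d : ℝ} (hac : L.a n < c)
    (hcb : c < L.b n) (hbd : L.b n < d) (hgap : n - 1 ∈ L.S → L.b (n - 1) < c) : LinkedList where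
  S := insert (n + 1) L.S
  nonempty := insert_nonempty _ _
  consecutive := by grind [L.consecutive, IsGreatest, mem_upperBounds]
  a i := if i = n + 1 then c else L.a i
  b i := if i = n + 1 then d else L.b i
  lt := by grind [L.lt]
  mono_a := by grind [L.mono_a, IsGreatest, mem_upperBounds]
  mono_b := by grind [L.mono_b, IsGreatest, mem_upperBounds]
  overlap := by grind [L.overlap, IsGreatest, mem_upperBounds]
  gap := by grind [L.gap, IsGreatest, mem_upperBounds]

section snoc

variable (hn : IsGreatest L.S n) {c d : ℝ} (hac : L.a n < c) (hcb : c < L.b n) (hbd : L.b n < d)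
  (hgap : n - 1 ∈ L.S → L.b (n - 1) < c)

theorem interval_snoc_of_mem {i : ℤ} (hi : i ∈ L.S) :
    (L.snoc hn hac hcb hbd hgap).interval i = L.interval i := by
  have hin : i ≠ n + 1 := (Int.lt_add_one_of_le (hn.2 hi)).ne
  simp [interval, snoc, hin]

theorem interval_snoc_succ : (L.snoc hn hac hcb hbd hgap).interval (n + 1) = Ioo c d := by
  simp [interval, snoc]

theorem union_snoc : (L.snoc hn hac hcb hbd hgap).union = L.union ∪ Ioo c d := by
  have hS : (L.snoc hn hac hcb hbd hgap).S = insert (n + 1) L.S := rfl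
  rw [union, hS, biUnion_insert, interval_snoc_succ, union_comm]
  exact congrArg (· ∪ Ioo c d) (iUnion₂_congr fun i hi => interval_snoc_of_mem _ _ _ _ _ hi)

end snoc

end LinkedList

section Domination

variable {P : Set (Set ℝ)} {c d : ℝ}

theorem Dominated.mono {J K : Set ℝ} (h : Dominated P K) (hJK : J ⊆ K) : Dominated P J :=
  h.imp fun _ hM => ⟨hM.1, hJK.trans hM.2⟩

theorem approxDominated_Ioo_iff (hcd : c < d) :
    ApproxDominated P (Ioo c d) ↔ ∀ p ∈ Ioo c d, ∀ q ∈ Ioo c d, Dominated P (Ioo p q) := by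
  constructor
  · rintro ⟨u, v, -, hmono, hdom, hU⟩ p hp q hq
    rw [hU, mem_iUnion] at hp hq
    obtain ⟨k, hk⟩ := hp
    obtain ⟨l, hl⟩ := hq
    have hmono : Monotone fun n => Ioo (u n) (v n) := monotone_nat_of_le_succ hmono
    have hk' := hmono (le_max_left k l) hk
    have hl' := hmono (le_max_right k l) hl
    exact (hdom (max k l)).mono (Ioo_subset_Ioo hk'.1.le hl'.2.le)
  · intro h
    obtain ⟨u, v, hu, hv, hu_mem, hv_mem, huv, hu_lim, hv_lim⟩ :=
      exists_seq_strictAnti_strictMono_tendsto hcd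
    refine ⟨u, v, fun n => huv n n,
      fun n => Ioo_subset_Ioo (hu n.lt_succ_self).le (hv n.lt_succ_self).le,
      fun n => h _ (hu_mem n) _ (hv_mem n), ?_⟩
    refine Subset.antisymm (fun t ht => ?_)
      (iUnion_subset fun n => Ioo_subset_Ioo (hu_mem n).1.le (hv_mem n).2.le)
    exact mem_iUnion.2 ((hu_lim.eventually_lt_const ht.1).and
      (hv_lim.eventually_const_lt ht.2)).exists

theorem ApproxDominated.mono {c' d' : ℝ} (h : ApproxDominated P (Ioo c d)) (hcd' : c' < d')
    (hsub : Ioo c' d' ⊆ Ioo c d) : ApproxDominated P (Ioo c' d') := by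
  have hcd : c < d := nonempty_Ioo.1 ((nonempty_Ioo.2 hcd').mono hsub)
  rw [approxDominated_Ioo_iff hcd] at h
  exact (approxDominated_Ioo_iff hcd').2 fun p hp q hq => h p (hsub hp) q (hsub hq)

theorem Dominated.approxDominated_Ioo (h : Dominated P (Ioo c d)) (hcd : c < d) :
    ApproxDominated P (Ioo c d) :=
  (approxDominated_Ioo_iff hcd).2 fun _ hp _ hq => h.mono (Ioo_subset_Ioo hp.1.le hq.2.le)

end Domination

namespace IsIntervalCollection

variable {P : Set (Set ℝ)} {x y : ℝ}

theorem isOpen (hP : IsIntervalCollection P) {J : Set ℝ} (hJ : J ∈ P) : IsOpen J := by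
  obtain ⟨c, d, -, rfl⟩ := hP J hJ
  exact isOpen_Ioo

theorem exists_Ioo_mem (hP : IsIntervalCollection P) (hx : x ∈ ⋃₀ P) :
    ∃ c d, Ioo c d ∈ P ∧ x ∈ Ioo c d := by
  obtain ⟨J, hJ, hxJ⟩ := hx
  obtain ⟨c, d, -, rfl⟩ := hP J hJ
  exact ⟨c, d, hJ, hxJ⟩

theorem approxDominated_Ioo_leftEnd (hP : IsIntervalCollection P) (hx : x ∈ ⋃₀ P)
    (hlt : leftEnd P x < x) : ApproxDominated P (Ioo (leftEnd P x) x) := by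
  refine (approxDominated_Ioo_iff hlt).2 fun p hp q hq => ?_
  obtain ⟨c, ⟨d, hcd, hxcd⟩, hcp⟩ := exists_lt_of_csInf_lt (hP.exists_Ioo_mem hx) hp.1
  exact ⟨_, hcd, Ioo_subset_Ioo hcp.le (hq.2.trans hxcd.2).le⟩

theorem approxDominated_Ioo_rightEnd (hP : IsIntervalCollection P) (hy : y ∈ ⋃₀ P)
    (hlt : y < rightEnd P y) : ApproxDominated P (Ioo y (rightEnd P y)) := by
  refine (approxDominated_Ioo_iff hlt).2 fun p hp q hq => ?_
  obtain ⟨d, ⟨c, hcd, hycd⟩, hqd⟩ :=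
    exists_lt_of_lt_csSup (exists_comm.1 (hP.exists_Ioo_mem hy)) hq.2
  exact ⟨_, hcd, Ioo_subset_Ioo (hycd.1.trans hp.1).le hqd.le⟩

end IsIntervalCollection

/-- The interval `(a, b)` admits a finite inner cover with respect to `P`. Here `(a, b)` need not be
the whole of `⋃₀ P`, so that covers of initial segments can be extended. -/
def HasFiniteInnerCover (P : Set (Set ℝ)) (a b : ℝ) : Prop :=
  ∃ L : LinkedList, IsInnerCover P a b L ∧ L.S.Finite

theorem ApproxDominated.hasFiniteInnerCover {P : Set (Set ℝ)} {a b : ℝ}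
    (h : ApproxDominated P (Ioo a b)) (hab : a < b) : HasFiniteInnerCover P a b := by
  refine ⟨.singleton a b hab, ⟨?_, fun _ _ => h⟩, finite_singleton 0⟩
  exact biUnion_singleton _ _

namespace HasFiniteInnerCover

variable {P : Set (Set ℝ)} {a c d e : ℝ}

theorem append_Ioo (h : HasFiniteInnerCover P a d) (hce : ApproxDominated P (Ioo c e))
    (hcd : c < d) (hde : d < e) : HasFiniteInnerCover P a e := by
  obtain ⟨L, ⟨hU, hdom⟩, hfin⟩ := h
  have had : a < d := nonempty_Ioo.1 (hU ▸ L.union_nonempty)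
  obtain ⟨n, hn⟩ : ∃ n, IsGreatest L.S n :=
    hfin.bddAbove.exists_isGreatest_of_nonempty L.nonempty
  obtain rfl : L.b n = d := (L.isLUB_union hn).unique (hU ▸ isLUB_Ioo had)
  obtain ⟨c', hc'b, hac', hcc', hnc', hgap⟩ := ((eventually_gt_nhds had).and
    ((eventually_gt_nhds hcd).and (L.eventually_nhds_b_gt_a_and_gt_b_pred hn.1))).exists_lt
  refine ⟨L.snoc hn hnc' hc'b hde hgap, ⟨?_, ?_⟩, hfin.insert _⟩
  · rw [LinkedList.union_snoc, hU, Ioo_union_Ioo' hc'b (had.trans hde), min_eq_left hac'.le,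
      max_eq_right hde.le]
  · rintro i (rfl | hi)
    · rw [LinkedList.interval_snoc_succ]
      exact hce.mono (hc'b.trans hde) (Ioo_subset_Ioo_left hcc'.le)
    · rw [LinkedList.interval_snoc_of_mem _ _ _ _ _ hi]
      exact hdom i hi

theorem extend_of_Icc_subset_sUnion (hP : IsIntervalCollection P) (h : HasFiniteInnerCover P a d)
    (hde : d ≤ e) (hsub : Icc d e ⊆ ⋃₀ P) : HasFiniteInnerCover P a e := by
  obtain ⟨t, ht0, hmono, ⟨m, hm⟩, ht⟩ := exists_monotone_Icc_subset_open_cover_Icc hde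
    (c := fun J : P => Subtype.val ⁻¹' (J : Set ℝ))
    (fun J => (hP.isOpen J.2).preimage continuous_subtype_val)
    (fun s _ => by simpa using hsub s.2)
  suffices hcover : ∀ n, HasFiniteInnerCover P a (t n) by
    simpa only [hm m le_rfl] using hcover m
  intro n
  induction n with
  | zero => rwa [ht0]
  | succ n ih =>
    rcases (hmono n.le_succ).eq_or_lt with heq | hlt
    · rwa [← heq]
    obtain ⟨⟨J, hJ⟩, htJ⟩ := ht n
    obtain ⟨u, v, -, rfl⟩ := hP J hJ
    have hu : u < t n := (htJ (left_mem_Icc.2 hlt.le)).1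
    have hv : t (n + 1) < v := (htJ (right_mem_Icc.2 hlt.le)).2
    have hdom : Dominated P (Ioo u (t (n + 1))) := ⟨_, hJ, Ioo_subset_Ioo_right hv.le⟩
    exact ih.append_Ioo (hdom.approxDominated_Ioo (hu.trans hlt)) hu hlt

end HasFiniteInnerCover

theorem stmt14_general {P : Set (Set ℝ)} {a b x y : ℝ} (hP : IsIntervalCollection P)
    (hU : Ioo a b ⊆ ⋃₀ P) (hx : x ∈ Ioo a b) (hy : y ∈ Ioo a b)
    (hax : ApproxDominated P (Ioo a x)) (hyb : ApproxDominated P (Ioo y b)) :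
    HasFiniteInnerCover P a b := by
  obtain ⟨z, hz, hzb⟩ := exists_between (max_lt hx.2 hy.2)
  obtain ⟨hxz, hyz⟩ := max_lt_iff.1 hz
  have hcover : HasFiniteInnerCover P a z :=
    (hax.hasFiniteInnerCover hx.1).extend_of_Icc_subset_sUnion hP hxz.le
      ((Icc_subset_Ioo hx.1 hzb).trans hU)
  exact hcover.append_Ioo hyb hyz hzb

/-- For `⋃₀ P = (a, b)`: if there are `x, y ∈ (a, b)` with `L_P(x) = a` and
`R_P(y) = b`, then `(a, b)` admits a finite inner cover with respect to `P`. -/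
theorem stmt14 (P : Set (Set ℝ)) (a b : ℝ) (hab : a < b)
    (hP : IsIntervalCollection P) (hU : ⋃₀ P = Ioo a b)
    (x y : ℝ) (hx : x ∈ Ioo a b) (hy : y ∈ Ioo a b)
    (hLx : leftEnd P x = a) (hRy : rightEnd P y = b) :
    ∃ L : LinkedList, IsInnerCover P a b L ∧ L.S.Finite := by
  have hax := hP.approxDominated_Ioo_leftEnd (hU ▸ hx) (hLx ▸ hx.1)
  have hyb := hP.approxDominated_Ioo_rightEnd (hU ▸ hy) (hRy ▸ hy.2)
  exact stmt14_general hP hU.ge hx hy (hLx ▸ hax) (hRy ▸ hyb)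
end

section
/- Let P be a collection of nonempty bounded open intervals of ℝ with ∪P ⊆ (a,b) for real numbers a < b. Suppose that L_P(x) > a and R_P(x) < b for every x ∈ ∪P. Then there exists an outer cover of (a,b) with respect to P that has no greatest element and no least element. -/
open Set

/-! Call two points separated by `P` if no member of `P` contains both. The hypothesis on `R_P` says
that each `x` is separated from all points close enough to `b`, and the one on `L_P` that it is
separated from all points close enough to `a`. Hence one can choose recursively, in both
directions from any starting point, an increasing sequence `t : ℤ → (a, b)` which tends to `a` and
to `b` and whose consecutive terms are separated. A member of `P` contains at most one term of `t`,
so it lies in some `(t n, t (n + 2))`, and the intervals `(t (2 * i), t (2 * i + 3))` form the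
outer cover.
-/

open Filter Topology

theorem exists_seq_tendsto_forall_rel {α : Type*} {l : Filter α} [l.NeBot]
    [l.IsCountablyGenerated] {r : α → α → Prop} (hr : ∀ x, ∀ᶠ y in l, r x y) (x₀ : α) :
    ∃ u : ℕ → α, u 0 = x₀ ∧ Tendsto u atTop l ∧ ∀ n, r (u n) (u (n + 1)) := by
  obtain ⟨s, hs⟩ := l.exists_antitone_basis
  have exists_next (n : ℕ) (x : α) : ∃ y ∈ s n, r x y :=
    nonempty_of_mem (inter_mem (hs.mem n) (hr x))
  choose next next_mem rel_next using exists_next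
  let u : ℕ → α := fun n ↦ Nat.rec x₀ next n
  have tendsto_succ : Tendsto (fun n ↦ u (n + 1)) atTop l := hs.tendsto fun n ↦ next_mem n (u n)
  exact ⟨u, rfl, (tendsto_add_atTop_iff_nat 1).1 tendsto_succ, fun n ↦ rel_next n (u n)⟩

theorem exists_int_seq_tendsto_forall_rel {α : Type*} {l l' : Filter α} [l.NeBot] [l'.NeBot]
    [l.IsCountablyGenerated] [l'.IsCountablyGenerated] {r : α → α → Prop}
    (hl : ∀ y, ∀ᶠ x in l, r x y) (hl' : ∀ x, ∀ᶠ y in l', r x y) :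
    ∃ t : ℤ → α, Tendsto t atBot l ∧ Tendsto t atTop l' ∧ ∀ n, r (t n) (t (n + 1)) := by
  obtain ⟨x₀⟩ := l.nonempty_of_neBot
  obtain ⟨u, hu₀, hu, hru⟩ := exists_seq_tendsto_forall_rel hl' x₀
  obtain ⟨v, hv₀, hv, hrv⟩ := exists_seq_tendsto_forall_rel (r := fun y x ↦ r x y) hl x₀
  let t : ℤ → α := fun n ↦ Int.casesOn n u fun k ↦ v (k + 1)
  have t_neg : ∀ n : ℕ, t (-n) = v n
    | 0 => hu₀.trans hv₀.symm
    | _ + 1 => rfl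
  refine ⟨t, ?_, ?_, ?_⟩
  · rw [← tendsto_comp_neg_atTop_iff, ← Nat.map_cast_int_atTop, tendsto_map'_iff]
    exact hv.congr fun n ↦ (t_neg n).symm
  · rw [← Nat.map_cast_int_atTop, tendsto_map'_iff]
    exact hu
  · rintro (n | _ | n)
    · exact hru n
    · change r (v 1) (u 0)
      rw [hu₀, ← hv₀]
      exact hrv 0
    · exact hrv (n + 1)

theorem exists_strictMono_int_forall_rel {α : Type*} [LinearOrder α] [DenselyOrdered α]
    [TopologicalSpace α] [OrderTopology α] [FirstCountableTopology α] {r : α → α → Prop} {a b : α}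
    (hab : a < b) (ha : ∀ y ∈ Ioo a b, ∀ᶠ x in 𝓝[>] a, r x y)
    (hb : ∀ x ∈ Ioo a b, ∀ᶠ y in 𝓝[<] b, r x y) :
    ∃ t : ℤ → α, StrictMono t ∧ IsGLB (range t) a ∧ IsLUB (range t) b ∧
      ∀ n, r (t n) (t (n + 1)) := by
  have : Nonempty (Ioo a b) := nonempty_Ioo_subtype hab
  have : (atBot : Filter (Ioo a b)).IsCountablyGenerated := by
    rw [← comap_coe_Ioo_nhdsGT a b (.of_dense a)]
    infer_instance
  have : (atTop : Filter (Ioo a b)).IsCountablyGenerated := by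
    rw [← comap_coe_Ioo_nhdsLT a b (.of_dense b)]
    infer_instance
  have tendsto_left : Tendsto ((↑) : Ioo a b → α) atBot (𝓝[>] a) :=
    (tendsto_Ioo_atBot (.of_dense a)).1 tendsto_id
  have tendsto_right : Tendsto ((↑) : Ioo a b → α) atTop (𝓝[<] b) :=
    (tendsto_Ioo_atTop (.of_dense b)).1 tendsto_id
  obtain ⟨t, htBot, htTop, hrt⟩ := exists_int_seq_tendsto_forall_rel
    (r := fun x y : Ioo a b ↦ x < y ∧ r x y)
    (fun y ↦ (eventually_lt_atBot y).and (tendsto_left.eventually (ha y y.2)))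
    (fun x ↦ (eventually_gt_atTop x).and (tendsto_right.eventually (hb x x.2)))
  have strictMono_t : StrictMono fun n ↦ (t n : α) := strictMono_int_of_lt_succ fun n ↦ (hrt n).1
  exact ⟨fun n ↦ t n, strictMono_t,
    isGLB_of_tendsto_atBot strictMono_t.monotone
      ((tendsto_left.comp htBot).mono_right nhdsWithin_le_nhds),
    isLUB_of_tendsto_atTop strictMono_t.monotone
      ((tendsto_right.comp htTop).mono_right nhdsWithin_le_nhds),
    fun n ↦ (hrt n).2⟩

theorem exists_subset_Ioo_of_forall_succ_notMem {α : Type*} [LinearOrder α] {t : ℤ → α}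
    (ht : Monotone t) {s : Set α} (hs : s.OrdConnected) {x : α} (hx : x ∈ s) {m k : ℤ}
    (hxt : x ∈ Icc (t m) (t k)) (hst : ∀ n, t n ∈ s → t (n + 1) ∉ s) :
    ∃ n, s ⊆ Ioo (t n) (t (n + 2)) := by
  have lt_succ : ∀ n, ∀ y ∈ s, y ≤ t n → ∀ z ∈ s, z < t (n + 1) := by
    intro n y hy hyn z hz
    by_contra! hnz
    have hn : t n ≤ t (n + 1) := ht (by lia)
    exact hst n (hs.out hy hz ⟨hyn, hn.trans hnz⟩) (hs.out hy hz ⟨hyn.trans hn, hnz⟩)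
  have lt_of_mem : ∀ y ∈ s, t (m - 1) < y := by
    intro y hy
    by_contra! hym
    have hxm : x < t m := by simpa only [sub_add_cancel] using lt_succ (m - 1) y hy hym x hx
    exact hxm.not_ge hxt.1
  -- For the largest `n` such that `t n` is a strict lower bound of `s`, some point of `s` is at
  -- most `t (n + 1)`, so a point of `s` beyond `t (n + 2)` would put two consecutive terms in `s`.
  obtain ⟨n, hn, n_max⟩ := Int.exists_greatest_of_bdd (P := fun n ↦ ∀ y ∈ s, t n < y)
    ⟨k, fun n hn ↦ (ht.reflect_lt ((hn x hx).trans_le hxt.2)).le⟩ ⟨m - 1, lt_of_mem⟩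
  obtain ⟨y, hy, hyn⟩ : ∃ y ∈ s, y ≤ t (n + 1) := by
    by_contra! hlt
    exact (n_max (n + 1) hlt).not_gt (lt_add_one n)
  have lt_add_two : ∀ z ∈ s, z < t (n + 2) := by
    simpa only [add_assoc, one_add_one_eq_two] using lt_succ (n + 1) y hy hyn
  exact ⟨n, fun z hz ↦ ⟨hn z hz, lt_add_two z hz⟩⟩

namespace LinkedList

/-- The bi-infinite linked list of the intervals `(t (2 * i), t (2 * i + 3))` spanned by a strictly
increasing sequence `t`. Consecutive intervals share `(t (2 * i + 2), t (2 * i + 3))`, so that every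
`(t n, t (n + 2))` is contained in one of them, whatever the parity of `n`. -/
def ofStrictMono (t : ℤ → ℝ) (ht : StrictMono t) : LinkedList where
  S := univ
  nonempty := univ_nonempty
  consecutive _ _ _ _ _ _ _ := mem_univ _
  a i := t (2 * i)
  b i := t (2 * i + 3)
  lt _ _ := ht (by lia)
  mono_a _ _ _ := ht (by lia)
  mono_b _ _ _ := ht (by lia)
  overlap _ _ _ := ht (by lia)
  gap _ _ _ := ht (by lia)

variable {t : ℤ → ℝ} (ht : StrictMono t)

theorem not_hasLeast_ofStrictMono : ¬(ofStrictMono t ht).HasLeast := fun ⟨i, _, hi⟩ ↦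
  (hi (i - 1) (mem_univ _)).not_gt (sub_one_lt i)

theorem not_hasGreatest_ofStrictMono : ¬(ofStrictMono t ht).HasGreatest := fun ⟨i, _, hi⟩ ↦
  (hi (i + 1) (mem_univ _)).not_gt (lt_add_one i)

theorem exists_Ioo_subset_interval_ofStrictMono (n : ℤ) :
    ∃ i ∈ (ofStrictMono t ht).S, Ioo (t n) (t (n + 2)) ⊆ (ofStrictMono t ht).interval i := by
  obtain ⟨i, hi⟩ := Int.even_or_odd' n
  exact ⟨i, mem_univ i, Ioo_subset_Ioo (ht.monotone (by lia)) (ht.monotone (by lia))⟩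

theorem exists_subset_interval_ofStrictMono {a b : ℝ} (ha : IsGLB (range t) a)
    (hb : IsLUB (range t) b) {s : Set ℝ} (hs : s.OrdConnected) (hne : s.Nonempty)
    (hsub : s ⊆ Ioo a b) (hst : ∀ n, t n ∈ s → t (n + 1) ∉ s) :
    ∃ i ∈ (ofStrictMono t ht).S, s ⊆ (ofStrictMono t ht).interval i := by
  obtain ⟨x, hx⟩ := hne
  obtain ⟨_, ⟨m, rfl⟩, hm⟩ := (isGLB_lt_iff ha).1 (hsub hx).1
  obtain ⟨_, ⟨k, rfl⟩, hk⟩ := (lt_isLUB_iff hb).1 (hsub hx).2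
  obtain ⟨n, hn⟩ :=
    exists_subset_Ioo_of_forall_succ_notMem ht.monotone hs hx ⟨hm.le, hk.le⟩ hst
  obtain ⟨i, hi, hni⟩ := exists_Ioo_subset_interval_ofStrictMono ht n
  exact ⟨i, hi, hn.trans hni⟩

theorem union_ofStrictMono {a b : ℝ} (ha : IsGLB (range t) a) (hb : IsLUB (range t) b) :
    (ofStrictMono t ht).union = Ioo a b := by
  refine Subset.antisymm (iUnion₂_subset fun i _ ↦ ?_) fun x hx ↦ ?_
  · exact Ioo_subset_Ioo (ha.1 (mem_range_self _)) (hb.1 (mem_range_self _))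
  · obtain ⟨i, hi, hxi⟩ := exists_subset_interval_ofStrictMono ht ha hb ordConnected_singleton
      (singleton_nonempty x) (singleton_subset_iff.2 hx)
      fun n hn hn' ↦ (ht (lt_add_one n)).ne (hn.trans hn'.symm)
    exact mem_iUnion₂.2 ⟨i, hi, hxi rfl⟩

end LinkedList

/-- Two points are separated by a family `P` of sets if no member of `P` contains both of them. This
is the relation required of consecutive terms of the sequence spanning an outer cover. -/
def Separated {α : Type*} (P : Set (Set α)) (x y : α) : Prop := ∀ J ∈ P, x ∈ J → y ∉ J

section

variable {P : Set (Set ℝ)} {a b c d x y : ℝ}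

theorem isOuterCover_ofStrictMono {t : ℤ → ℝ} (ht : StrictMono t) (ha : IsGLB (range t) a)
    (hb : IsLUB (range t) b) (hP : IsIntervalCollection P) (hU : ⋃₀ P ⊆ Ioo a b)
    (hsep : ∀ n, Separated P (t n) (t (n + 1))) :
    IsOuterCover P a b (LinkedList.ofStrictMono t ht) := by
  refine ⟨LinkedList.union_ofStrictMono ht ha hb, fun J hJ ↦ ?_⟩
  obtain ⟨c, d, hcd, rfl⟩ := hP J hJ
  exact LinkedList.exists_subset_interval_ofStrictMono ht ha hb ordConnected_Ioo
    (nonempty_Ioo.2 hcd) ((subset_sUnion_of_mem hJ).trans hU) fun n ↦ hsep n _ hJ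

theorem leftEnd_le (hbdd : BddBelow (⋃₀ P)) (hcd : Ioo c d ∈ P) (hx : x ∈ Ioo c d) :
    leftEnd P x ≤ c := by
  obtain ⟨B, hB⟩ := hbdd
  refine csInf_le ⟨B, ?_⟩ ⟨d, hcd, hx⟩
  rintro c' ⟨d', hcd', hx'⟩
  exact (isGLB_Ioo (hx'.1.trans hx'.2)).2 fun y hy ↦ hB ⟨_, hcd', hy⟩

theorem le_rightEnd (hbdd : BddAbove (⋃₀ P)) (hcd : Ioo c d ∈ P) (hx : x ∈ Ioo c d) :
    d ≤ rightEnd P x := by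
  obtain ⟨B, hB⟩ := hbdd
  refine le_csSup ⟨B, ?_⟩ ⟨c, hcd, hx⟩
  rintro d' ⟨c', hcd', hx'⟩
  exact (isLUB_Ioo (hx'.1.trans hx'.2)).2 fun y hy ↦ hB ⟨_, hcd', hy⟩

namespace IsIntervalCollection

theorem separated_of_le_leftEnd (hP : IsIntervalCollection P) (hbdd : BddBelow (⋃₀ P))
    (hxy : x ≤ leftEnd P y) : Separated P x y := by
  intro J hJ hx hy
  obtain ⟨c, d, -, rfl⟩ := hP J hJ
  exact (hxy.trans (leftEnd_le hbdd hJ hy)).not_gt hx.1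

theorem separated_of_rightEnd_le (hP : IsIntervalCollection P) (hbdd : BddAbove (⋃₀ P))
    (hxy : rightEnd P x ≤ y) : Separated P x y := by
  intro J hJ hx hy
  obtain ⟨c, d, -, rfl⟩ := hP J hJ
  exact ((le_rightEnd hbdd hJ hx).trans hxy).not_gt hy.2

theorem eventually_separated_left (hP : IsIntervalCollection P) (hbdd : BddBelow (⋃₀ P))
    (hy : y ∈ ⋃₀ P → a < leftEnd P y) : ∀ᶠ x in 𝓝[>] a, Separated P x y := by
  by_cases hyU : y ∈ ⋃₀ P
  · filter_upwards [Ioo_mem_nhdsGT (hy hyU)] with x hx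
    exact hP.separated_of_le_leftEnd hbdd hx.2.le
  · exact .of_forall fun x J hJ _ hyJ ↦ hyU ⟨J, hJ, hyJ⟩

theorem eventually_separated_right (hP : IsIntervalCollection P) (hbdd : BddAbove (⋃₀ P))
    (hx : x ∈ ⋃₀ P → rightEnd P x < b) : ∀ᶠ y in 𝓝[<] b, Separated P x y := by
  by_cases hxU : x ∈ ⋃₀ P
  · filter_upwards [Ioo_mem_nhdsLT (hx hxU)] with y hy
    exact hP.separated_of_rightEnd_le hbdd hy.1.le
  · exact .of_forall fun y J hJ hxJ ↦ (hxU ⟨J, hJ, hxJ⟩).elim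

end IsIntervalCollection

end

/-- For `⋃₀ P ⊆ (a, b)`: if `L_P(x) > a` and `R_P(x) < b` for every
`x ∈ ⋃₀ P`, then there is an outer cover of `(a, b)` with respect to `P` having no greatest
and no least element. -/
theorem stmt15 (P : Set (Set ℝ)) (a b : ℝ) (hab : a < b)
    (hP : IsIntervalCollection P) (hU : ⋃₀ P ⊆ Ioo a b)
    (h : ∀ x ∈ ⋃₀ P, a < leftEnd P x ∧ rightEnd P x < b) :
    ∃ L : LinkedList, IsOuterCover P a b L ∧ ¬L.HasLeast ∧ ¬L.HasGreatest := by
  obtain ⟨t, ht, ha, hb, hsep⟩ := exists_strictMono_int_forall_rel (r := Separated P) hab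
    (fun y _ ↦ hP.eventually_separated_left (bddBelow_Ioo.mono hU) fun hy ↦ (h y hy).1)
    (fun x _ ↦ hP.eventually_separated_right (bddAbove_Ioo.mono hU) fun hx ↦ (h x hx).2)
  exact ⟨.ofStrictMono t ht, isOuterCover_ofStrictMono ht ha hb hP hU hsep,
    LinkedList.not_hasLeast_ofStrictMono ht, LinkedList.not_hasGreatest_ofStrictMono ht⟩
end
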